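/- Let A and B be C*-algebras, let e ∈ A and f ∈ B be projections, set I = {a * e : a ∈ A} and J = {b * f : b ∈ B}, and let φ : I → J be a bijective linear map which is completely isometric. Then φ is multiplicative (φ(x * y) = φ(x) * φ(y) for all x, y ∈ I) if and only if φ(e) = f. -/

import Mathlib

open Filter Topology

/-- The canonical C*-norm of an `n × n` matrix over a (possibly non-unital) C*-algebra `A`:
the operator norm of left multiplication on the Hilbert `A`-module of columns `Aⁿ`.
(This is the unique C*-norm on `Mₙ(A)`.) -/
noncomputable def cnorm {A : Type*} [NonUnitalCStarAlgebra A] {n : ℕ}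
    (x : Matrix (Fin n) (Fin n) A) : ℝ :=
  sSup {r : ℝ | ∃ v : Fin n → A, ‖∑ i, star (v i) * v i‖ ≤ 1 ∧
    r = Real.sqrt ‖∑ i, star (x.mulVec v i) * (x.mulVec v i)‖}

/-- A map `T` defined on a subspace `V` of a C*-algebra `A`, with values in a C*-algebra `B`,
is completely isometric if for every `n`, applying `T` entrywise to `n × n` matrices with
entries in `V` preserves the canonical C*-norm of matrices. -/
def IsCompletelyIsometric {A B : Type*} [NonUnitalCStarAlgebra A] [NonUnitalCStarAlgebra B]
    {V : Submodule ℂ A} (T : V → B) : Prop :=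
  ∀ (n : ℕ) (x : Matrix (Fin n) (Fin n) V),
    cnorm (x.map T) = cnorm (x.map ((↑) : V → A))
/-- The left ideal `{a * e : a ∈ A}` of a C*-algebra `A`, as a `ℂ`-submodule. -/
def principalLeftIdeal (A : Type*) [NonUnitalCStarAlgebra A] (e : A) : Submodule ℂ A where
  carrier := {x | ∃ a : A, x = a * e}
  add_mem' := by rintro x y ⟨a, rfl⟩ ⟨b, rfl⟩; exact ⟨a + b, (add_mul a b e).symm⟩
  zero_mem' := ⟨0, (zero_mul e).symm⟩
  smul_mem' := by rintro c x ⟨a, rfl⟩; exact ⟨c • a, (smul_mul_assoc c a e).symm⟩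

/-!
`{a * e : a ∈ A}` is a Hilbert C⋆-module with inner product `x⋆y`, and the norm of a matrix with a
single nonzero column `x` is `‖∑ xᵢ⋆xᵢ‖ ^ (1/2)`. In the corner `fBf` the order is determined by the
norm: `a ≤ b` as soon as `‖c + a‖ ≤ ‖c + b‖` for all positive `c`. Since every positive element of
`fBf` is some `φ(t)⋆φ(t)`, preservation of column norms forces `∑ φ(xᵢ)⋆φ(xᵢ)` to depend only on
`∑ xᵢ⋆xᵢ`, and by polarization `φ(x)⋆φ(y)` depends only on `x⋆y`. If `φ(e) = f`, comparing `x⋆y`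
with `e⋆(x⋆y)` gives `φ(x⋆y) = φ(x)⋆φ(y)`, and multiplicativity follows by testing against
all `φ(t)⋆`. Conversely, if `φ` is multiplicative then `φ(e)` is a contraction `g` with `gf = g` and
`fg = f`, and this forces `g = f`.
-/

section ColumnNorm

variable {A : Type*} [NonUnitalCStarAlgebra A] {ι : Type*} [Fintype ι]

lemma sum_star_mul_mul_mul {R : Type*} [NonUnitalSemiring R] [StarRing R] (x : ι → R) (v : R) :
    ∑ i, star (x i * v) * (x i * v) = star v * (∑ i, star (x i) * x i) * v := by
  simp only [star_mul, Finset.mul_sum, Finset.sum_mul, mul_assoc]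

lemma isSelfAdjoint_sum_star_mul_self {R : Type*} [NonUnitalSemiring R] [StarRing R] (x : ι → R) :
    IsSelfAdjoint (∑ i, star (x i) * x i) :=
  isSelfAdjoint_sum _ fun i _ => .star_mul_self (x i)

lemma norm_mul_self_le_norm_sum_star_mul_self (v : ι → A) (j : ι) :
    ‖v j‖ * ‖v j‖ ≤ ‖∑ i, star (v i) * v i‖ := by
  let _ := CStarAlgebra.spectralOrder A
  have _ := CStarAlgebra.spectralOrderedRing A
  rw [← CStarRing.norm_star_mul_self]
  exact CStarAlgebra.norm_le_norm_of_nonneg_of_le (star_mul_self_nonneg _) <|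
    Finset.single_le_sum (f := fun i => star (v i) * v i)
      (fun i _ => star_mul_self_nonneg (v i)) (Finset.mem_univ j)

lemma norm_pow_three_le_norm_mul_mul_self {a : A} (ha : IsSelfAdjoint a) :
    ‖a‖ ^ 3 ≤ ‖a * a * a‖ := by
  rcases (norm_nonneg a).eq_or_lt with h₀ | hpos
  · simp [← h₀]
  have hsq : IsSelfAdjoint (a * a) := by
    simpa only [ha.star_eq] using IsSelfAdjoint.star_mul_self a
  refine le_of_mul_le_mul_right ?_ hpos
  calc ‖a‖ ^ 3 * ‖a‖ = ‖a * a * a * a‖ := by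
        rw [mul_assoc (a * a), hsq.norm_mul_self, ha.norm_mul_self]; ring
    _ ≤ ‖a * a * a‖ * ‖a‖ := norm_mul_le _ _

lemma exists_norm_le_one_norm_le_norm_conjugate {a : A} (ha : IsSelfAdjoint a) :
    ∃ v : A, ‖v‖ ≤ 1 ∧ ‖a‖ ≤ ‖star v * a * v‖ := by
  rcases eq_or_ne a 0 with rfl | h₀
  · exact ⟨0, by simp⟩
  have hpos : 0 < ‖a‖ := norm_pos_iff.mpr h₀
  refine ⟨‖a‖⁻¹ • a, ?_, ?_⟩
  · rw [norm_smul, norm_inv, norm_norm, inv_mul_cancel₀ hpos.ne']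
  calc ‖a‖ = (‖a‖⁻¹ * ‖a‖⁻¹) * ‖a‖ ^ 3 := by field_simp
    _ ≤ (‖a‖⁻¹ * ‖a‖⁻¹) * ‖a * a * a‖ :=
        mul_le_mul_of_nonneg_left (norm_pow_three_le_norm_mul_mul_self ha) (by positivity)
    _ = ‖star (‖a‖⁻¹ • a) * a * (‖a‖⁻¹ • a)‖ := by
        simp only [star_smul, star_trivial, ha.star_eq, smul_mul_assoc, mul_smul_comm, norm_smul,
          norm_inv, norm_norm, mul_assoc]

lemma cnorm_updateCol_zero {n : ℕ} (x : Fin n → A) (j : Fin n) :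
    cnorm ((0 : Matrix (Fin n) (Fin n) A).updateCol j x) = √‖∑ i, star (x i) * x i‖ := by
  have hmulVec (v : Fin n → A) (i : Fin n) :
      ((0 : Matrix (Fin n) (Fin n) A).updateCol j x).mulVec v i = x i * v j := by
    simp [Matrix.mulVec, dotProduct, Matrix.updateCol_apply]
  have hconj_le (v : A) (hv : ‖v‖ * ‖v‖ ≤ 1) :
      ‖star v * (∑ i, star (x i) * x i) * v‖ ≤ ‖∑ i, star (x i) * x i‖ :=
    calc _ ≤ ‖star v‖ * ‖∑ i, star (x i) * x i‖ * ‖v‖ := norm_mul₃_le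
      _ = ‖∑ i, star (x i) * x i‖ * (‖v‖ * ‖v‖) := by rw [norm_star]; ring
      _ ≤ _ := mul_le_of_le_one_right (norm_nonneg _) hv
  unfold cnorm
  simp only [hmulVec, sum_star_mul_mul_mul]
  refine IsGreatest.csSup_eq ⟨?_, ?_⟩
  · obtain ⟨v, hv, hle⟩ :=
      exists_norm_le_one_norm_le_norm_conjugate (isSelfAdjoint_sum_star_mul_self x)
    have hvv : ‖v‖ * ‖v‖ ≤ 1 := mul_le_one₀ hv (norm_nonneg v) hv
    refine ⟨Pi.single j v, ?_, ?_⟩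
    · simpa [Pi.single_apply, CStarRing.norm_star_mul_self] using hvv
    · rw [Pi.single_eq_same, hle.antisymm (hconj_le v hvv)]
  · rintro r ⟨v, hv, rfl⟩
    exact Real.sqrt_le_sqrt <|
      hconj_le (v j) ((norm_mul_self_le_norm_sum_star_mul_self v j).trans hv)

end ColumnNorm

/-- A map from a subspace of a C⋆-algebra into a C⋆-algebra is column isometric if, for every `n`,
applying it entrywise preserves the norm `‖∑ i, (x i)⋆ * x i‖ ^ (1 / 2)` of columns of length `n`.
The square roots are omitted on both sides. -/
def IsColumnIsometric {A B : Type*} [NonUnitalCStarAlgebra A] [NonUnitalCStarAlgebra B]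
    {V : Submodule ℂ A} (T : V → B) : Prop :=
  ∀ (n : ℕ) (x : Fin n → V),
    ‖∑ i, star (T (x i)) * T (x i)‖ = ‖∑ i, star (x i : A) * (x i : A)‖

section CompletelyIsometric

variable {A B : Type*} [NonUnitalCStarAlgebra A] [NonUnitalCStarAlgebra B]
  {V : Submodule ℂ A} {T : V → B}

lemma IsCompletelyIsometric.isColumnIsometric (hT : IsCompletelyIsometric T) (hT₀ : T 0 = 0) :
    IsColumnIsometric T := by
  intro n x
  rcases n with _ | n
  · simp
  have hcnorm := hT (n + 1) ((0 : Matrix _ _ V).updateCol 0 x)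
  simp only [Matrix.map_updateCol, Matrix.map_zero _ hT₀, Matrix.map_zero _ Submodule.coe_zero,
    cnorm_updateCol_zero] at hcnorm
  exact (Real.sqrt_inj (norm_nonneg _) (norm_nonneg _)).mp hcnorm

lemma IsColumnIsometric.norm_map (hT : IsColumnIsometric T) (x : V) : ‖T x‖ = ‖(x : A)‖ := by
  have hcol := hT 1 fun _ => x
  simp only [Fin.sum_univ_one, CStarRing.norm_star_mul_self] at hcol
  exact (mul_self_inj (norm_nonneg _) (norm_nonneg _)).mp hcol

lemma IsColumnIsometric.symm {W : Submodule ℂ B} {φ : V ≃ₗ[ℂ] W}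
    (hφ : IsColumnIsometric fun x => (φ x : B)) :
    IsColumnIsometric fun y => (φ.symm y : A) := fun n y => by
  simpa only [LinearEquiv.apply_symm_apply] using (hφ n fun i => φ.symm (y i)).symm

end CompletelyIsometric

section Corner

variable {A : Type*} [NonUnitalCStarAlgebra A] [PartialOrder A] [StarOrderedRing A] {p a b : A}

lemma le_norm_smul_of_mul_mul_eq (hp : IsStarProjection p) (ha : IsSelfAdjoint a)
    (hpa : p * a * p = a) : a ≤ ‖a‖ • p := by
  have hle := CStarAlgebra.star_left_conjugate_le_norm_smul (a := p) ha
  rwa [hp.isSelfAdjoint.star_eq, hp.isIdempotentElem.eq, hpa] at hle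

lemma le_of_forall_norm_add_le_norm_add (hp : IsStarProjection p) (ha : IsSelfAdjoint a)
    (hb : IsSelfAdjoint b) (hpa : p * a * p = a) (hpb : p * b * p = b)
    (h : ∀ c, 0 ≤ c → p * c * p = c → ‖c + a‖ ≤ ‖c + b‖) : a ≤ b := by
  set c := ‖b‖ • p - b with hc
  have hc_nonneg : 0 ≤ c := sub_nonneg.mpr (le_norm_smul_of_mul_mul_eq hp hb hpb)
  have hpc : p * c * p = c := by
    simp only [hc, mul_sub, sub_mul, hpb, mul_smul_comm, smul_mul_assoc, hp.isIdempotentElem.eq]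
  have hnorm : ‖c + a‖ ≤ ‖b‖ :=
    calc ‖c + a‖ ≤ ‖c + b‖ := h c hc_nonneg hpc
      _ = ‖b‖ * ‖p‖ := by rw [hc, sub_add_cancel, norm_smul, norm_norm]
      _ ≤ ‖b‖ := mul_le_of_le_one_right (norm_nonneg b) hp.norm_le
  have hle : c + a ≤ c + b :=
    calc c + a ≤ ‖c + a‖ • p :=
          le_norm_smul_of_mul_mul_eq hp (hc_nonneg.isSelfAdjoint.add ha)
            (by rw [mul_add, add_mul, hpc, hpa])
      _ ≤ ‖b‖ • p := smul_le_smul_of_nonneg_right hnorm hp.nonneg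
      _ = c + b := (sub_add_cancel _ _).symm
  exact le_of_add_le_add_left hle

lemma exists_mem_principalLeftIdeal_star_mul_self_eq (hp : IsSelfAdjoint p) (ha : 0 ≤ a)
    (hpa : p * a * p = a) : ∃ q ∈ principalLeftIdeal A p, star q * q = a := by
  refine ⟨CFC.sqrt a * p, ⟨_, rfl⟩, ?_⟩
  rw [star_mul, hp.star_eq, (CFC.sqrt_nonneg a).isSelfAdjoint.star_eq, ← mul_assoc, mul_assoc p,
    CFC.sqrt_mul_sqrt_self a ha, hpa]

end Corner

lemma eq_of_isStarProjection_of_norm_le_one {A : Type*} [NonUnitalCStarAlgebra A] {p g : A}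
    (hp : IsStarProjection p) (hg : ‖g‖ ≤ 1) (hgp : g * p = g) (hpg : p * g = p) : g = p := by
  let _ := CStarAlgebra.spectralOrder A
  have _ := CStarAlgebra.spectralOrderedRing A
  have hp_star := hp.isSelfAdjoint.star_eq
  have hpg_star : p * star g = star g := by simpa [hp_star] using congrArg star hgp
  have hgp_star : star g * p = p := by simpa [hp_star] using congrArg star hpg
  have hgg_le : star g * g ≤ p :=
    calc star g * g ≤ ‖star g * g‖ • p := le_norm_smul_of_mul_mul_eq hp (.star_mul_self g)
          (by rw [← mul_assoc, hpg_star, mul_assoc, hgp])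
      _ ≤ (1 : ℝ) • p := smul_le_smul_of_nonneg_right
          (CStarRing.norm_star_mul_self.trans_le (mul_le_one₀ hg (norm_nonneg g) hg)) hp.nonneg
      _ = p := one_smul ℝ p
  have hsub : star (g - p) * (g - p) = star g * g - p := by
    simp only [star_sub, hp_star, sub_mul, mul_sub, hgp_star, hpg, hp.isIdempotentElem.eq,
      sub_self, sub_zero]
  have hsub_zero : star (g - p) * (g - p) = 0 :=
    le_antisymm (hsub.trans_le (sub_nonpos.mpr hgg_le)) (star_mul_self_nonneg _)
  exact sub_eq_zero.mp ((CStarRing.star_mul_self_eq_zero_iff _).mp hsub_zero)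

section PrincipalLeftIdeal

variable {A : Type*} [NonUnitalCStarAlgebra A] {e : A}

lemma mul_eq_self_of_mem_principalLeftIdeal (he : IsIdempotentElem e) {x : A}
    (hx : x ∈ principalLeftIdeal A e) : x * e = x := by
  obtain ⟨a, rfl⟩ := hx
  rw [mul_assoc, he.eq]

lemma mul_star_eq_star_of_mem_principalLeftIdeal (he : IsStarProjection e) {x : A}
    (hx : x ∈ principalLeftIdeal A e) : e * star x = star x := by
  simpa [he.isSelfAdjoint.star_eq] using
    congrArg star (mul_eq_self_of_mem_principalLeftIdeal he.isIdempotentElem hx)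

lemma mul_mem_principalLeftIdeal (a : A) {x : A} (hx : x ∈ principalLeftIdeal A e) :
    a * x ∈ principalLeftIdeal A e := by
  obtain ⟨b, rfl⟩ := hx
  exact ⟨a * b, (mul_assoc a b e).symm⟩

lemma mul_sum_star_mul_self_mul {ι : Type*} [Fintype ι] (he : IsStarProjection e)
    (x : ι → principalLeftIdeal A e) :
    e * (∑ i, star (x i : A) * x i) * e = ∑ i, star (x i : A) * x i := by
  have hconj := sum_star_mul_mul_mul (fun i => (x i : A)) e
  simp only [mul_eq_self_of_mem_principalLeftIdeal he.isIdempotentElem (x _).2,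
    he.isSelfAdjoint.star_eq] at hconj
  exact hconj.symm

end PrincipalLeftIdeal

namespace IsColumnIsometric

section InnerProduct

variable {A B : Type*} [NonUnitalCStarAlgebra A] [NonUnitalCStarAlgebra B] {f : B}
  {V : Submodule ℂ A} {φ : V ≃ₗ[ℂ] principalLeftIdeal B f}

lemma sum_star_mul_self_le [PartialOrder B] [StarOrderedRing B]
    (hφ : IsColumnIsometric fun x => (φ x : B)) (hf : IsStarProjection f) {n : ℕ}
    {x y : Fin n → V} (hxy : ∑ i, star (x i : A) * x i = ∑ i, star (y i : A) * y i) :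
    ∑ i, star (φ (x i) : B) * φ (x i) ≤ ∑ i, star (φ (y i) : B) * φ (y i) := by
  refine le_of_forall_norm_add_le_norm_add hf (isSelfAdjoint_sum_star_mul_self _)
    (isSelfAdjoint_sum_star_mul_self _) (mul_sum_star_mul_self_mul hf _)
    (mul_sum_star_mul_self_mul hf _) fun c hc hfc => ?_
  obtain ⟨q, hq, rfl⟩ := exists_mem_principalLeftIdeal_star_mul_self_eq hf.isSelfAdjoint hc hfc
  obtain ⟨t, ht⟩ := φ.surjective ⟨q, hq⟩
  have hcons (z : Fin n → V) : ‖star q * q + ∑ i, star (φ (z i) : B) * φ (z i)‖ =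
      ‖star (t : A) * t + ∑ i, star (z i : A) * z i‖ := by
    simpa [Fin.sum_univ_succ, ht] using hφ (n + 1) (Fin.cons t z)
  rw [hcons, hcons, hxy]

lemma sum_star_mul_self_eq (hφ : IsColumnIsometric fun x => (φ x : B))
    (hf : IsStarProjection f) {n : ℕ} {x y : Fin n → V}
    (hxy : ∑ i, star (x i : A) * x i = ∑ i, star (y i : A) * y i) :
    ∑ i, star (φ (x i) : B) * φ (x i) = ∑ i, star (φ (y i) : B) * φ (y i) := by
  let _ := CStarAlgebra.spectralOrder B
  have _ := CStarAlgebra.spectralOrderedRing B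
  exact le_antisymm (hφ.sum_star_mul_self_le hf hxy) (hφ.sum_star_mul_self_le hf hxy.symm)

-- `x⋆y + y⋆x = (x + y)⋆(x + y) - x⋆x - y⋆y`, with the negative terms moved across the equation.
lemma star_mul_add_star_mul_eq (hφ : IsColumnIsometric fun x => (φ x : B))
    (hf : IsStarProjection f) {x y x' y' : V}
    (h : star (x : A) * y + star (y : A) * x = star (x' : A) * y' + star (y' : A) * x') :
    star (φ x : B) * φ y + star (φ y : B) * φ x =
      star (φ x' : B) * φ y' + star (φ y' : B) * φ x' := by
  have hsum := hφ.sum_star_mul_self_eq hf (x := ![x + y, x', y']) (y := ![x' + y', x, y]) (by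
    simp only [Fin.sum_univ_three, Matrix.cons_val, Submodule.coe_add, star_add, add_mul, mul_add]
    linear_combination (norm := abel) h)
  simp only [Fin.sum_univ_three, Matrix.cons_val, map_add, Submodule.coe_add, star_add, add_mul,
    mul_add] at hsum
  linear_combination (norm := abel) hsum

lemma star_mul_eq (hφ : IsColumnIsometric fun x => (φ x : B)) (hf : IsStarProjection f)
    {x y x' y' : V} (h : star (x : A) * y = star (x' : A) * y') :
    star (φ x : B) * φ y = star (φ x' : B) * φ y' := by
  have h_star : star (y : A) * x = star (y' : A) * x' := by simpa using congrArg star h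
  have hre := hφ.star_mul_add_star_mul_eq hf (x := x) (y := y) (x' := x') (y' := y')
    (by rw [h, h_star])
  have him := hφ.star_mul_add_star_mul_eq hf
    (x := x) (y := Complex.I • y) (x' := x') (y' := Complex.I • y') (by
      simp only [Submodule.coe_smul, star_smul, mul_smul_comm, smul_mul_assoc, h, h_star])
  simp only [map_smul, Submodule.coe_smul, star_smul, mul_smul_comm, smul_mul_assoc,
    Complex.star_def, Complex.conj_I, neg_smul, neg_mul, ← sub_eq_add_neg, ← smul_sub] at him
  have hsub := smul_right_injective B Complex.I_ne_zero him
  linear_combination (norm := module) (1 / 2 : ℂ) • hre + (1 / 2 : ℂ) • hsub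

end InnerProduct

section Multiplicative

variable {A B : Type*} [NonUnitalCStarAlgebra A] [NonUnitalCStarAlgebra B] {e : A} {f : B}
  {φ : principalLeftIdeal A e ≃ₗ[ℂ] principalLeftIdeal B f}

lemma mul_map_eq_map_of_mul_eq (hφ : IsColumnIsometric fun x => (φ x : B))
    (he : IsStarProjection e) (hf : IsStarProjection f) {u : principalLeftIdeal A e}
    (hu : (u : A) = e) (hφu : (φ u : B) = f) {w : principalLeftIdeal A e}
    (hw : e * (w : A) = w) : f * (φ w : B) = φ w := by
  obtain ⟨v, hv⟩ := φ.surjective ⟨f * φ w, mul_mem_principalLeftIdeal f (φ w).2⟩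
  have hφv : (φ v : B) = f * φ w := congrArg Subtype.val hv
  have hev : e * (v : A) = w := by
    have hinner := hφ.symm.star_mul_eq he (x := φ u) (y := φ v) (x' := φ u) (y' := φ w) (by
      rw [hφu, hφv, hf.isSelfAdjoint.star_eq, ← mul_assoc, hf.isIdempotentElem.eq])
    simpa only [LinearEquiv.symm_apply_apply, hu, he.isSelfAdjoint.star_eq, hw] using hinner
  have hvv : star (v : A) * v = star (v : A) * w := by
    have hinner := hφ.symm.star_mul_eq he (x := φ v) (y := φ v) (x' := φ v) (y' := φ w) (by
      rw [hφv, star_mul, hf.isSelfAdjoint.star_eq, mul_assoc, mul_assoc, ← mul_assoc f f,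
        hf.isIdempotentElem.eq])
    simpa only [LinearEquiv.symm_apply_apply] using hinner
  have hwv : star (w : A) * v = star (w : A) * w := by
    rw [← hev, star_mul, he.isSelfAdjoint.star_eq, mul_assoc, mul_assoc, ← mul_assoc e e,
        he.isIdempotentElem.eq]
  have hvw : v = w := by
    refine Subtype.ext <| sub_eq_zero.mp <| (CStarRing.star_mul_self_eq_zero_iff _).mp ?_
    rw [star_sub, sub_mul, mul_sub, mul_sub, hvv, hwv, sub_self, sub_self, sub_zero]
  rw [← hφv, hvw]

lemma map_star_mul (hφ : IsColumnIsometric fun x => (φ x : B))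
    (he : IsStarProjection e) (hf : IsStarProjection f) {u : principalLeftIdeal A e}
    (hu : (u : A) = e) (hφu : (φ u : B) = f) {x y w : principalLeftIdeal A e}
    (hw : (w : A) = star (x : A) * y) : (φ w : B) = star (φ x : B) * φ y := by
  have hew : e * (w : A) = w := by
    rw [hw, ← mul_assoc, mul_star_eq_star_of_mem_principalLeftIdeal he x.2]
  have hinner := hφ.star_mul_eq hf (x := u) (y := w) (x' := x) (y' := y)
    (by rw [hu, he.isSelfAdjoint.star_eq, hew, hw])
  rwa [hφu, hf.isSelfAdjoint.star_eq, hφ.mul_map_eq_map_of_mul_eq he hf hu hφu hew] at hinner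

lemma map_mul_of_map_eq (hφ : IsColumnIsometric fun x => (φ x : B))
    (he : IsStarProjection e) (hf : IsStarProjection f) {u : principalLeftIdeal A e}
    (hu : (u : A) = e) (hφu : (φ u : B) = f) {x y z : principalLeftIdeal A e}
    (hz : (z : A) = x * y) : (φ z : B) = φ x * φ y := by
  have hstar_mul (t : principalLeftIdeal A e) :
      star (φ t : B) * φ z = star (φ t : B) * (φ x * φ y) := by
    let w : principalLeftIdeal A e := ⟨star (x : A) * t, mul_mem_principalLeftIdeal _ t.2⟩
    calc star (φ t : B) * φ z = star (φ w : B) * φ y := hφ.star_mul_eq hf (by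
          rw [hz, star_mul, star_star, mul_assoc])
      _ = star (star (φ x : B) * φ t) * φ y := by rw [hφ.map_star_mul he hf hu hφu (w := w) rfl]
      _ = star (φ t : B) * (φ x * φ y) := by rw [star_mul, star_star, mul_assoc]
  obtain ⟨t, ht⟩ := φ.surjective
    (φ z - ⟨φ x * φ y, mul_mem_principalLeftIdeal _ (φ y).2⟩)
  have hφt : (φ t : B) = φ z - φ x * φ y := congrArg Subtype.val ht
  refine sub_eq_zero.mp <| (CStarRing.star_mul_self_eq_zero_iff _).mp ?_
  rw [← hφt]
  nth_rw 2 [hφt]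
  rw [mul_sub, hstar_mul, sub_self]

lemma map_eq_of_forall_map_mul (hφ : IsColumnIsometric fun x => (φ x : B))
    (he : IsStarProjection e) (hf : IsStarProjection f) {u : principalLeftIdeal A e}
    (hu : (u : A) = e)
    (hmul : ∀ x y z : principalLeftIdeal A e, (z : A) = x * y → (φ z : B) = φ x * φ y) :
    (φ u : B) = f := by
  have hnorm : ‖(φ u : B)‖ ≤ 1 := by
    rw [hφ.norm_map, hu]
    exact he.norm_le
  have hfu : f * (φ u : B) = f := by
    obtain ⟨t, ht⟩ := φ.surjective ⟨f, f, hf.isIdempotentElem.eq.symm⟩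
    have htu : (t : A) = t * u := by
      rw [hu, mul_eq_self_of_mem_principalLeftIdeal he.isIdempotentElem t.2]
    simpa only [ht] using (hmul t u t htu).symm
  exact eq_of_isStarProjection_of_norm_le_one hf hnorm
    (mul_eq_self_of_mem_principalLeftIdeal hf.isIdempotentElem (φ u).2) hfu

end Multiplicative

end IsColumnIsometric

theorem multiplicative_iff_unital_general
    {A B : Type*} [NonUnitalCStarAlgebra A] [NonUnitalCStarAlgebra B] {e : A} {f : B}
    (he : IsStarProjection e) (hf : IsStarProjection f)
    (φ : principalLeftIdeal A e ≃ₗ[ℂ] principalLeftIdeal B f)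
    (hφ : IsColumnIsometric fun x => (φ x : B)) :
    (∀ x y z : principalLeftIdeal A e, (z : A) = (x : A) * (y : A) →
        (φ z : B) = (φ x : B) * (φ y : B)) ↔
      (φ ⟨e, e, he.isIdempotentElem.eq.symm⟩ : B) = f :=
  ⟨hφ.map_eq_of_forall_map_mul he hf rfl,
    fun hφe _ _ _ hz => hφ.map_mul_of_map_eq he hf rfl hφe hz⟩

theorem multiplicative_iff_unital
    {A B : Type*} [NonUnitalCStarAlgebra A] [NonUnitalCStarAlgebra B]
    (e : A) (f : B) (he₁ : star e = e) (he₂ : e * e = e)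
    (hf₁ : star f = f) (hf₂ : f * f = f)
    (φ : principalLeftIdeal A e →ₗ[ℂ] principalLeftIdeal B f)
    (hbij : Function.Bijective φ)
    (hci : IsCompletelyIsometric (fun x => (φ x : B))) :
    (∀ x y z : principalLeftIdeal A e, (z : A) = (x : A) * (y : A) →
        (φ z : B) = (φ x : B) * (φ y : B)) ↔
      (φ ⟨e, e, he₂.symm⟩ : B) = f := by
  exact multiplicative_iff_unital_general ⟨he₂, he₁⟩ ⟨hf₂, hf₁⟩ (LinearEquiv.ofBijective φ hbij)
    (hci.isColumnIsometric (by simp))
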